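/- arXiv:1611.06699 — 3 statements merged into one kernel-verified Lean document; each statement's English description precedes it below -/
import Mathlib

section
/- Let α be an irrational real number, let p be an integer and q a positive integer with p and q relatively prime, and let r be a nonzero integer and s a positive integer with r and s relatively prime. Set β := p/q + (r/s)α. Then lim_{n→∞} (1/n) ∑_{j=1}^n {jα}{jβ} = 1/4 + gcd(s,q)² / (12 s r q²). -/
open Filter Finset

lemma ii_of_bdd {f : ℝ → ℝ} (hf : Measurable f) (C : ℝ) (hC : ∀ x, |f x| ≤ C) (a b : ℝ) :
    IntervalIntegrable f MeasureTheory.volume a b := by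
  refine (intervalIntegrable_const (c := C)).mono_fun hf.aestronglyMeasurable ?_
  filter_upwards with x
  exact (hC x).trans (le_abs_self C)

lemma dilate {h : ℝ → ℝ} (hp : Function.Periodic h 1)
    (hi : ∀ a b : ℝ, IntervalIntegrable h MeasureTheory.volume a b) (n : ℤ) (hn : n ≠ 0) (d : ℝ) :
    ∫ x in (0:ℝ)..1, h (n * x + d) = ∫ x in (0:ℝ)..1, h x := by
  have hn' : (n : ℝ) ≠ 0 := by exact_mod_cast hn
  rw [intervalIntegral.integral_comp_mul_add h hn' d]
  have h1 := hp.intervalIntegral_add_zsmul_eq n d hi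
  have h2 := hp.intervalIntegral_add_eq d 0
  rw [zero_add] at h2
  have e1 : (n:ℝ) * 0 + d = d := by ring
  have e2 : (n:ℝ) * 1 + d = d + n • (1:ℝ) := by simp; ring
  rw [e1, e2, h1, h2]
  simp only [zsmul_eq_mul, smul_eq_mul]
  field_simp

lemma hermite_fract (n : ℕ) (hn : 0 < n) (m : ℤ) (h : IsCoprime m (n : ℤ)) (y : ℝ) :
    ∑ c ∈ range n, Int.fract (y + m * c / n) = Int.fract (n * y) + ((n : ℝ) - 1) / 2 := by
  have hn' : (n : ℝ) ≠ 0 := by positivity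
  have hnp : (0 : ℝ) < n := by positivity
  have hz : (0 : ℤ) < n := by exact_mod_cast hn
  set k := ⌊(n : ℝ) * y⌋ with hk
  set t := Int.fract ((n : ℝ) * y) with ht
  have ht0 : 0 ≤ t := Int.fract_nonneg _
  have ht1 : t < 1 := Int.fract_lt_one _
  have hy : (n : ℝ) * y = k + t := (Int.floor_add_fract _).symm
  have term : ∀ c ∈ range n, Int.fract (y + m * c / n)
      = ((((k + m * c) % n).toNat : ℕ) : ℝ) / n + t / n := by
    intro c _
    have hm0 : 0 ≤ (k + m * c) % (n : ℤ) := Int.emod_nonneg _ hz.ne'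
    have hm1 : (k + m * c) % (n : ℤ) + 1 ≤ n := Int.emod_lt_of_pos _ hz
    have hc : ((((k + m * c) % n).toNat : ℕ) : ℝ) = (((k + m * c) % (n : ℤ) : ℤ) : ℝ) := by
      exact_mod_cast congrArg (Int.cast : ℤ → ℝ) (Int.toNat_of_nonneg hm0)
    rw [hc]
    have hm0' : (0 : ℝ) ≤ (((k + m * c) % (n : ℤ) : ℤ) : ℝ) := by exact_mod_cast hm0
    have hm1' : (((k + m * c) % (n : ℤ) : ℤ) : ℝ) + 1 ≤ n := by exact_mod_cast hm1
    rw [Int.fract_eq_iff]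
    refine ⟨by positivity, ?_, (k + m * c) / (n : ℤ), ?_⟩
    · rw [← add_div, div_lt_one hnp]; linarith
    · have hd : ((k : ℝ) + m * c) = n * (((k + m * c) / (n : ℤ) : ℤ) : ℝ)
          + (((k + m * c) % (n : ℤ) : ℤ) : ℝ) := by
        exact_mod_cast (Int.mul_ediv_add_emod (k + m * c) n).symm
      have hy' : y = (k + t) / n := by field_simp; linarith
      rw [hy']
      field_simp
      linarith
  rw [sum_congr rfl term, sum_add_distrib, ← sum_div]
  have perm : ∑ c ∈ range n, (((((k + m * c) % n).toNat : ℕ)) : ℝ) = ∑ i ∈ range n, (i : ℝ) := by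
    have hmaps : Set.MapsTo (fun c : ℕ => ((k + m * c) % (n : ℤ)).toNat) (range n : Set ℕ) (range n) := by
      intro c _
      have hm0 : 0 ≤ (k + m * c) % (n : ℤ) := Int.emod_nonneg _ hz.ne'
      have hm1 : (k + m * c) % (n : ℤ) < n := Int.emod_lt_of_pos _ hz
      simp only [coe_range, Set.mem_Iio]
      omega
    have hinj : Set.InjOn (fun c : ℕ => ((k + m * c) % (n : ℤ)).toNat) (range n : Set ℕ) := by
      intro a ha b hb hab
      simp only [coe_range, Set.mem_Iio] at ha hb hab
      have h1 : 0 ≤ (k + m * a) % (n : ℤ) := Int.emod_nonneg _ hz.ne'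
      have h2 : 0 ≤ (k + m * b) % (n : ℤ) := Int.emod_nonneg _ hz.ne'
      have h3 : (k + m * a) % (n : ℤ) = (k + m * b) % (n : ℤ) := by omega
      have h4 : (n : ℤ) ∣ m * ((a : ℤ) - b) := by
        have := Int.ModEq.dvd (n := (n : ℤ)) (a := k + m * b) (b := k + m * a) h3.symm
        convert this using 1; ring
      have h5 : (n : ℤ) ∣ (a : ℤ) - b := h.symm.dvd_of_dvd_mul_left h4
      have h6 := Int.eq_zero_of_abs_lt_dvd h5 (by rw [abs_lt]; constructor <;> omega)
      omega
    refine sum_nbij (fun c : ℕ => ((k + m * c) % (n : ℤ)).toNat) hmaps hinj ?_ (fun _ _ => rfl)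
    exact Finset.surjOn_of_injOn_of_card_le _ hmaps hinj le_rfl
  rw [perm]
  have hs : (∑ i ∈ range n, (i : ℝ)) * 2 = n * ((n : ℝ) - 1) := by
    have := Finset.sum_range_id_mul_two n
    have h2 : (((∑ i ∈ range n, i) * 2 : ℕ) : ℝ) = ((n * (n - 1) : ℕ) : ℝ) := by rw [this]
    push_cast [Nat.cast_sub hn] at h2
    simpa using h2
  have hs' : (∑ i ∈ range n, (i : ℝ)) = n * ((n : ℝ) - 1) / 2 := by linarith
  rw [hs']
  simp only [sum_const, card_range, nsmul_eq_mul]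
  field_simp
  ring

noncomputable def sB (x : ℝ) : ℝ := Int.fract x - 1 / 2

lemma sB_meas : Measurable sB := measurable_fract.sub_const _

lemma sB_abs (x : ℝ) : |sB x| ≤ 1 := by
  have := Int.fract_nonneg x
  have := Int.fract_lt_one x
  unfold sB
  rw [abs_le]; constructor <;> linarith

lemma sB_add_int (x : ℝ) (n : ℤ) : sB (x + n) = sB x := by simp [sB]

lemma sB_hermite (n : ℕ) (hn : 0 < n) (m : ℤ) (h : IsCoprime m (n : ℤ)) (y : ℝ) :
    ∑ c ∈ range n, sB (y + m * c / n) = sB (n * y) := by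
  unfold sB
  rw [sum_sub_distrib, hermite_fract n hn m h]
  simp
  ring

lemma sB_prod_ii (a b c d : ℝ) (u v : ℝ) :
    IntervalIntegrable (fun x => sB (a * x + b) * sB (c * x + d)) MeasureTheory.volume u v := by
  have h1 : Measurable (fun x => sB (a * x + b)) := sB_meas.comp (by fun_prop)
  have h2 : Measurable (fun x => sB (c * x + d)) := sB_meas.comp (by fun_prop)
  refine ii_of_bdd (h1.mul h2) 1 (fun x => ?_) u v
  rw [Pi.mul_apply, abs_mul]
  exact mul_le_one₀ (sB_abs _) (abs_nonneg _) (sB_abs _)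

lemma sB_prod_per (a b : ℤ) :
    Function.Periodic (fun x : ℝ => sB (a * x) * sB (b * x)) 1 := by
  intro x
  have e (n : ℤ) : sB ((n : ℝ) * (x + 1)) = sB (n * x) := by
    rw [mul_add, mul_one, sB_add_int]
  simp only [e]

noncomputable def corr (a b : ℤ) : ℝ := ∫ x in (0:ℝ)..1, sB (a * x) * sB (b * x)

lemma sB_prod_ii' (a b : ℤ) (u v : ℝ) :
    IntervalIntegrable (fun x : ℝ => sB (a * x) * sB (b * x)) MeasureTheory.volume u v := by
  simpa using sB_prod_ii a 0 b 0 u v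

lemma corr_mul (n : ℤ) (hn : n ≠ 0) (a b : ℤ) : corr (n * a) (n * b) = corr a b := by
  unfold corr
  rw [← dilate (sB_prod_per a b) (sB_prod_ii' a b) n hn 0]
  congr 1
  ext x
  push_cast
  congr 2 <;> ring

lemma corr_scale (a : ℕ) (ha : 0 < a) (b : ℤ) (h : IsCoprime b (a : ℤ)) :
    (a : ℝ) * corr a b = corr 1 b := by
  have ha' : (a : ℝ) ≠ 0 := by positivity
  have h1 : ∀ c ∈ range a, corr a b
      = ∫ x in (0:ℝ)..1, sB (a * x) * sB (b * x + b * c / a) := by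
    intro c _
    unfold corr
    rw [← dilate (sB_prod_per a b) (sB_prod_ii' a b) 1 one_ne_zero ((c : ℝ) / a)]
    congr 1
    ext x
    have e1 : ((a : ℤ) : ℝ) * (((1 : ℤ) : ℝ) * x + c / a) = a * x + (c : ℤ) := by
      push_cast; field_simp
    have e2 : (b : ℝ) * (((1 : ℤ) : ℝ) * x + c / a) = b * x + b * c / a := by
      push_cast; field_simp
    rw [e1, e2, sB_add_int]
  have h2 : (a : ℝ) * corr a b = ∑ c ∈ range a, corr a b := by simp
  rw [h2, sum_congr rfl h1, ← intervalIntegral.integral_finsetSum]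
  · rw [← corr_mul a (by exact_mod_cast ha.ne') 1 b]
    unfold corr
    congr 1
    ext x
    rw [← mul_sum, sB_hermite a ha b h]
    push_cast
    congr 2 <;> ring
  · intro c _
    simpa using sB_prod_ii a 0 b (b * c / a) 0 1

lemma corr_comm (a b : ℤ) : corr a b = corr b a := by
  unfold corr
  congr 1
  ext x
  ring

lemma corr_one : corr 1 1 = 1 / 12 := by
  have : corr 1 1 = ∫ x in (0:ℝ)..1, (x - 1 / 2) ^ 2 := by
    unfold corr
    apply intervalIntegral.integral_congr_ae
    have : ∀ᵐ x : ℝ, x ≠ 1 := by simp [MeasureTheory.ae_iff]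
    filter_upwards [this] with x hx hx2
    rw [Set.uIoc_of_le zero_le_one] at hx2
    have : Int.fract x = x := Int.fract_eq_self.2 ⟨hx2.1.le, lt_of_le_of_ne hx2.2 hx⟩
    simp [sB, this]
    ring
  rw [this, intervalIntegral.integral_comp_sub_right (fun x => x ^ 2), integral_pow]
  norm_num

lemma corr_neg (a b : ℤ) (hb : b ≠ 0) : corr a (-b) = - corr a b := by
  unfold corr
  rw [← intervalIntegral.integral_neg]
  apply intervalIntegral.integral_congr_ae
  have hc : (Set.range (fun n : ℤ => (n : ℝ) / b)).Countable := Set.countable_range _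
  filter_upwards [hc.ae_notMem MeasureTheory.volume] with x hx _
  have hf : Int.fract ((b : ℝ) * x) ≠ 0 := by
    intro h
    rw [Int.fract_eq_iff] at h
    obtain ⟨_, _, z, hz⟩ := h
    apply hx
    refine ⟨z, ?_⟩
    have hb' : (b : ℝ) ≠ 0 := by exact_mod_cast hb
    simp only
    field_simp
    linarith
  have : sB (((-b : ℤ) : ℝ) * x) = - sB (b * x) := by
    unfold sB
    rw [Int.cast_neg, neg_mul, Int.fract_neg hf]
    ring
  rw [this]; ring

lemma corr_pos (a b : ℕ) (ha : 0 < a) (hb : 0 < b) (h : IsCoprime (b : ℤ) (a : ℤ)) :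
    corr a b = 1 / (12 * a * b) := by
  have ha' : (a : ℝ) ≠ 0 := by positivity
  have hb' : (b : ℝ) ≠ 0 := by positivity
  have h1 := corr_scale a ha b h
  have h2 := corr_scale b hb 1 isCoprime_one_left
  rw [corr_comm 1 b] at h1
  rw [corr_one] at h2
  have : corr a b = (1 / 12) / b / a := by
    rw [← h2, eq_div_iff ha', eq_div_iff hb']
    linear_combination (b : ℝ) * h1
  rw [this]; field_simp

lemma corr_coprime (a b : ℤ) (ha : 0 < a) (hb : b ≠ 0) (h : IsCoprime b a) :
    corr a b = 1 / (12 * a * b) := by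
  lift a to ℕ using ha.le
  rcases lt_or_gt_of_ne hb with hb | hb
  · obtain ⟨c, hc⟩ := Int.eq_ofNat_of_zero_le (a := -b) (by omega)
    have e : b = -(c : ℤ) := by omega
    subst e
    rw [corr_neg _ _ (by omega), corr_pos a c (by omega) (by omega) (by simpa using h.neg_left)]
    push_cast
    rw [mul_neg, div_neg]
  · lift b to ℕ using hb.le
    rw [corr_pos a b (by omega) (by omega) h]; push_cast; rfl

lemma corr_eq (a b : ℤ) (ha : 0 < a) (hb : b ≠ 0) :
    corr a b = (Int.gcd a b : ℝ) ^ 2 / (12 * a * b) := by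
  have hg : 0 < Int.gcd a b := Int.gcd_pos_of_ne_zero_left _ ha.ne'
  obtain ⟨a', ha'⟩ := Int.gcd_dvd_left a b
  obtain ⟨b', hb'⟩ := Int.gcd_dvd_right a b
  have hco : IsCoprime b' a' := by
    have := Int.isCoprime_iff_gcd_eq_one.2 (Int.gcd_div_gcd_div_gcd hg)
    rw [Int.ediv_eq_of_eq_mul_right (by omega) ha', Int.ediv_eq_of_eq_mul_right (by omega) hb'] at this
    exact this.symm
  set g := Int.gcd a b
  have hgz : (0 : ℤ) < g := by exact_mod_cast hg
  have ha0 : 0 < a' := by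
    rw [ha'] at ha; exact pos_of_mul_pos_right ha hgz.le
  have hb0 : b' ≠ 0 := by rintro rfl; simp at hb'; exact hb hb'
  clear_value g
  subst ha' hb'
  rw [corr_mul _ hgz.ne', corr_coprime a' b' ha0 hb0 hco]
  have : (g : ℝ) ≠ 0 := by positivity
  have : (a' : ℝ) ≠ 0 := by exact_mod_cast ha0.ne'
  have : (b' : ℝ) ≠ 0 := by exact_mod_cast hb0
  push_cast
  field_simp

lemma weyl_fourier (θ : ℝ) (hθ : Irrational θ) (x0 : ℝ) (n : ℤ) :
    Tendsto (fun N : ℕ => ((N : ℂ))⁻¹ * ∑ m ∈ range N,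
      (fourier n : C(AddCircle (1:ℝ), ℂ)) ((x0 + m * θ : ℝ) : AddCircle (1:ℝ))) atTop
      (nhds (∫ x in (0:ℝ)..1, (fourier n : C(AddCircle (1:ℝ), ℂ)) (x : AddCircle (1:ℝ)))) := by
  by_cases hn : n = 0
  · subst hn
    have : ∀ x : AddCircle (1:ℝ), (fourier 0 : C(AddCircle (1:ℝ), ℂ)) x = 1 := fun x => fourier_zero
    simp only [this]
    simp only [sum_const, card_range, nsmul_eq_mul, mul_one, intervalIntegral.integral_const,
      sub_zero, one_smul]
    apply tendsto_const_nhds.congr'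
    filter_upwards [eventually_gt_atTop 0] with N hN
    rw [inv_mul_cancel₀]
    exact_mod_cast hN.ne'
  have hn' : (n : ℂ) ≠ 0 := by exact_mod_cast hn
  have hc : (2 * (Real.pi : ℂ) * Complex.I * n) ≠ 0 := by
    simp [hn', Real.pi_ne_zero]
  have hint : (∫ x in (0:ℝ)..1, (fourier n : C(AddCircle (1:ℝ), ℂ)) (x : AddCircle (1:ℝ))) = 0 := by
    simp only [fourier_coe_apply, Complex.ofReal_one, div_one]
    rw [integral_exp_mul_complex hc]
    have : Complex.exp (2 * (Real.pi : ℂ) * Complex.I * n * ((1:ℝ) : ℂ)) = 1 := by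
      rw [Complex.exp_eq_one_iff]
      exact ⟨n, by push_cast; ring⟩
    rw [this]; simp
  rw [hint]
  set w : ℂ := Complex.exp (2 * (Real.pi : ℂ) * Complex.I * n * θ) with hw
  have hw1 : w ≠ 1 := by
    intro h
    rw [hw, Complex.exp_eq_one_iff] at h
    obtain ⟨k, hk⟩ := h
    have hk2 : (n : ℂ) * θ = k := by
      have h2 : (2 * (Real.pi : ℂ) * Complex.I) ≠ 0 := by simp [Real.pi_ne_zero]
      apply mul_left_cancel₀ h2
      linear_combination hk
    have hk3 : (n : ℝ) * θ = k := by exact_mod_cast hk2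
    exact (hθ.intCast_mul hn).ne_int k hk3
  have hwn : ‖w‖ = 1 := by
    rw [hw, show (2 * (Real.pi : ℂ) * Complex.I * n * θ)
      = ((2 * Real.pi * n * θ : ℝ) : ℂ) * Complex.I by push_cast; ring]
    exact Complex.norm_exp_ofReal_mul_I _
  have hterm : ∀ m : ℕ, (fourier n : C(AddCircle (1:ℝ), ℂ)) ((x0 + m * θ : ℝ) : AddCircle (1:ℝ))
      = Complex.exp (2 * (Real.pi : ℂ) * Complex.I * n * x0) * w ^ m := by
    intro m
    rw [fourier_coe_apply, hw, ← Complex.exp_nat_mul, ← Complex.exp_add]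
    congr 1
    push_cast
    ring
  have hz : ‖Complex.exp (2 * (Real.pi : ℂ) * Complex.I * n * x0)‖ = 1 := by
    rw [show (2 * (Real.pi : ℂ) * Complex.I * n * x0)
      = ((2 * Real.pi * n * x0 : ℝ) : ℂ) * Complex.I by push_cast; ring]
    exact Complex.norm_exp_ofReal_mul_I _
  have hpos : 0 < ‖w - 1‖ := norm_pos_iff.2 (sub_ne_zero.2 hw1)
  have hlim : Tendsto (fun N : ℕ => ((N : ℝ))⁻¹ * (2 / ‖w - 1‖)) atTop (nhds 0) := by
    simpa using (tendsto_inv_atTop_nhds_zero_nat (𝕜 := ℝ)).mul_const (2 / ‖w - 1‖)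
  refine squeeze_zero_norm (fun N => ?_) hlim
  simp only [hterm]
  rw [← mul_sum, geom_sum_eq hw1, norm_mul, norm_mul, norm_div, hz, norm_inv, one_mul,
    Complex.norm_natCast]
  gcongr
  calc ‖w ^ N - 1‖ ≤ ‖w ^ N‖ + ‖(1:ℂ)‖ := norm_sub_le _ _
    _ = 2 := by rw [norm_pow, hwn]; norm_num

lemma weyl_cont (θ : ℝ) (hθ : Irrational θ) (x0 : ℝ) (f : C(AddCircle (1:ℝ), ℂ)) :
    Tendsto (fun N : ℕ => ((N : ℂ))⁻¹ * ∑ m ∈ range N, f ((x0 + m * θ : ℝ) : AddCircle (1:ℝ))) atTop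
      (nhds (∫ x in (0:ℝ)..1, f (x : AddCircle (1:ℝ)))) := by
  have hcont : ∀ g : C(AddCircle (1:ℝ), ℂ), Continuous (fun x : ℝ => g (x : AddCircle (1:ℝ))) :=
    fun g => g.continuous.comp (AddCircle.continuous_mk' 1)
  have hii : ∀ g : C(AddCircle (1:ℝ), ℂ),
      IntervalIntegrable (fun x : ℝ => g (x : AddCircle (1:ℝ))) MeasureTheory.volume 0 1 :=
    fun g => (hcont g).intervalIntegrable 0 1
  have hspan : ∀ g ∈ Submodule.span ℂ (Set.range (@fourier (1:ℝ))),
      Tendsto (fun N : ℕ => ((N : ℂ))⁻¹ * ∑ m ∈ range N, g ((x0 + m * θ : ℝ) : AddCircle (1:ℝ)))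
        atTop (nhds (∫ x in (0:ℝ)..1, g (x : AddCircle (1:ℝ)))) := by
    intro g hg
    induction hg using Submodule.span_induction with
    | mem g h => obtain ⟨n, rfl⟩ := h; exact weyl_fourier θ hθ x0 n
    | zero => simp
    | add g h _ _ ihg ihh =>
      simp only [ContinuousMap.add_apply]
      rw [intervalIntegral.integral_add (hii g) (hii h)]
      refine (ihg.add ihh).congr fun N => ?_
      rw [sum_add_distrib]; ring
    | smul a g _ ih =>
      simp only [ContinuousMap.smul_apply, smul_eq_mul]
      rw [intervalIntegral.integral_const_mul]
      refine (ih.const_mul a).congr fun N => ?_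
      rw [← mul_sum]; ring
  have hmem : f ∈ (Submodule.span ℂ (Set.range (@fourier (1:ℝ)))).topologicalClosure := by
    rw [span_fourier_closure_eq_top]; trivial
  rw [Metric.tendsto_atTop]
  intro ε hε
  obtain ⟨g, hg, hfg⟩ := Metric.mem_closure_iff.1 hmem (ε / 3) (by positivity)
  rw [dist_eq_norm] at hfg
  obtain ⟨N0, hN0⟩ := Metric.tendsto_atTop.1 (hspan g hg) (ε / 3) (by positivity)
  refine ⟨max N0 1, fun N hN => ?_⟩
  have hN1 : 0 < N := by have := le_max_right N0 1; omega
  have h1 := hN0 N (le_trans (le_max_left _ _) hN)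
  rw [dist_eq_norm] at h1 ⊢
  have hpt : ∀ x, ‖(f - g) x‖ ≤ ε / 3 := fun x => ((f - g).norm_coe_le_norm x).trans hfg.le
  have h2 : ‖((N : ℂ))⁻¹ * ∑ m ∈ range N, (f - g) ((x0 + m * θ : ℝ) : AddCircle (1:ℝ))‖ ≤ ε / 3 := by
    rw [norm_mul, norm_inv, Complex.norm_natCast]
    have : ‖∑ m ∈ range N, (f - g) ((x0 + m * θ : ℝ) : AddCircle (1:ℝ))‖ ≤ N * (ε / 3) := by
      refine (norm_sum_le_of_le _ (fun m _ => hpt _)).trans ?_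
      simp
    have hNr : (0:ℝ) < N := by exact_mod_cast hN1
    rw [inv_mul_le_iff₀ hNr]
    exact this
  have h3 : ‖∫ x in (0:ℝ)..1, (f - g) (x : AddCircle (1:ℝ))‖ ≤ ε / 3 := by
    have := intervalIntegral.norm_integral_le_of_norm_le_const (a := 0) (b := 1)
      (f := fun x : ℝ => (f - g) (x : AddCircle (1:ℝ))) (C := ε / 3) (fun x _ => hpt _)
    simpa using this
  have e2 : ((N : ℂ))⁻¹ * ∑ m ∈ range N, (f - g) ((x0 + m * θ : ℝ) : AddCircle (1:ℝ))
    = ((N : ℂ))⁻¹ * ∑ m ∈ range N, f ((x0 + m * θ : ℝ) : AddCircle (1:ℝ))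
      - ((N : ℂ))⁻¹ * ∑ m ∈ range N, g ((x0 + m * θ : ℝ) : AddCircle (1:ℝ)) := by
    simp only [ContinuousMap.sub_apply]
    rw [sum_sub_distrib]; ring
  have e3 : ∫ x in (0:ℝ)..1, (f - g) (x : AddCircle (1:ℝ))
    = (∫ x in (0:ℝ)..1, f (x : AddCircle (1:ℝ))) - ∫ x in (0:ℝ)..1, g (x : AddCircle (1:ℝ)) := by
    simp only [ContinuousMap.sub_apply]
    rw [intervalIntegral.integral_sub (hii f) (hii g)]
  rw [e2] at h2
  rw [e3] at h3
  generalize (∫ x in (0:ℝ)..1, f (x : AddCircle (1:ℝ))) = If at *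
  generalize (∫ x in (0:ℝ)..1, g (x : AddCircle (1:ℝ))) = Ig at *
  generalize ((N : ℂ))⁻¹ * ∑ m ∈ range N, f ((x0 + m * θ : ℝ) : AddCircle (1:ℝ)) = Af at *
  generalize ((N : ℂ))⁻¹ * ∑ m ∈ range N, g ((x0 + m * θ : ℝ) : AddCircle (1:ℝ)) = Ag at *
  calc ‖Af - If‖ = ‖(Af - Ag) + (Ag - Ig) - (If - Ig)‖ := by congr 1; ring
    _ ≤ ‖(Af - Ag) + (Ag - Ig)‖ + ‖If - Ig‖ := norm_sub_le _ _
    _ ≤ ‖Af - Ag‖ + ‖Ag - Ig‖ + ‖If - Ig‖ := by gcongr; exact norm_add_le _ _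
    _ < ε := by linarith

lemma weyl_real (θ : ℝ) (hθ : Irrational θ) (x0 : ℝ) (f : ℝ → ℝ) (hf : Continuous f)
    (hp : Function.Periodic f 1) :
    Tendsto (fun N : ℕ => ((N : ℝ))⁻¹ * ∑ m ∈ range N, f (x0 + m * θ)) atTop
      (nhds (∫ x in (0:ℝ)..1, f x)) := by
  have hp' : Function.Periodic (fun x => (f x : ℂ)) 1 := fun x => by simp only [hp x]
  let F : C(AddCircle (1:ℝ), ℂ) :=
    ⟨hp'.lift, continuous_coinduced_dom.2 (Complex.continuous_ofReal.comp hf)⟩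
  have hF : ∀ x : ℝ, F (x : AddCircle (1:ℝ)) = f x := fun x => rfl
  have := weyl_cont θ hθ x0 F
  simp only [hF] at this
  rw [intervalIntegral.integral_ofReal] at this
  have h2 := (Complex.continuous_re.tendsto _).comp this
  rw [Complex.ofReal_re] at h2
  refine h2.congr fun N => ?_
  simp only [Function.comp]
  rw [← Complex.ofReal_re ((N : ℝ)⁻¹ * ∑ m ∈ range N, f (x0 + m * θ))]
  push_cast
  rfl

/-- Functions with values in the unit interval that can be approximated by continuous ones. -/
structure Good (f : ℝ → ℝ) : Prop where
  meas : Measurable f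
  nonneg : ∀ x, 0 ≤ f x
  le_one : ∀ x, f x ≤ 1
  approx : ∀ ε > 0, ∃ G e : ℝ → ℝ, Continuous G ∧ Continuous e ∧ Function.Periodic G 1 ∧
    Function.Periodic e 1 ∧ (∀ x, 0 ≤ G x) ∧ (∀ x, G x ≤ 1) ∧ (∀ x, |f x - G x| ≤ e x) ∧
    ∫ x in (0:ℝ)..1, e x ≤ ε

lemma Good.ii {f : ℝ → ℝ} (h : Good f) (a b : ℝ) :
    IntervalIntegrable f MeasureTheory.volume a b :=
  ii_of_bdd h.meas 1 (fun x => by rw [abs_of_nonneg (h.nonneg x)]; exact h.le_one x) a b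

lemma good_fract : Good Int.fract where
  meas := measurable_fract
  nonneg := Int.fract_nonneg
  le_one x := (Int.fract_lt_one x).le
  approx ε hε := by
    obtain ⟨k, hk⟩ := exists_nat_gt (2 / ε)
    have hk0 : k ≠ 0 := by
      rintro rfl
      have : 0 < 2 / ε := by positivity
      simp at hk; linarith
    have hper : ∀ u : ℝ → ℝ, Function.Periodic (fun x => u (Int.fract x)) 1 := by
      intro u x; simp only [Int.fract_add_one]
    have hc : Continuous (fun x : ℝ => (fun t : ℝ => t ^ k + (1 - t) ^ k) (Int.fract x)) := by
      refine ContinuousOn.comp_fract'' (f := fun t : ℝ => t ^ k + (1 - t) ^ k) ?_ ?_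
      · fun_prop
      · simp [hk0]
    refine ⟨fun x => (fun t : ℝ => t * (1 - t ^ k)) (Int.fract x),
      fun x => (fun t : ℝ => t ^ k + (1 - t) ^ k) (Int.fract x), ?_, hc,
      hper (fun t : ℝ => t * (1 - t ^ k)), hper (fun t : ℝ => t ^ k + (1 - t) ^ k), ?_, ?_, ?_, ?_⟩
    · refine ContinuousOn.comp_fract'' (f := fun t : ℝ => t * (1 - t ^ k)) ?_ ?_
      · fun_prop
      · simp
    · intro x
      have h0 := Int.fract_nonneg x
      have h1 := (Int.fract_lt_one x).le
      have h2 : Int.fract x ^ k ≤ 1 := pow_le_one₀ h0 h1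
      exact mul_nonneg h0 (by linarith)
    · intro x
      have h0 := Int.fract_nonneg x
      have h1 := (Int.fract_lt_one x).le
      have h2 : 0 ≤ Int.fract x ^ k := pow_nonneg h0 k
      have h3 : Int.fract x ^ k ≤ 1 := pow_le_one₀ h0 h1
      exact mul_le_one₀ h1 (by linarith) (by linarith)
    · intro x
      have h0 := Int.fract_nonneg x
      have h1 := (Int.fract_lt_one x).le
      have h2 : 0 ≤ Int.fract x ^ k := pow_nonneg h0 k
      have h4 : 0 ≤ (1 - Int.fract x) ^ k := pow_nonneg (by linarith) k
      simp only
      have : Int.fract x - Int.fract x * (1 - Int.fract x ^ k) = Int.fract x * Int.fract x ^ k := by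
        ring
      rw [this, abs_of_nonneg (by positivity)]
      nlinarith
    · have : ∫ x in (0:ℝ)..1, (fun t : ℝ => t ^ k + (1 - t) ^ k) (Int.fract x)
          = ∫ x in (0:ℝ)..1, (x ^ k + (1 - x) ^ k) := by
        apply intervalIntegral.integral_congr_ae
        have : ∀ᵐ x : ℝ, x ≠ 1 := by simp [MeasureTheory.ae_iff]
        filter_upwards [this] with x hx hx2
        rw [Set.uIoc_of_le zero_le_one] at hx2
        have : Int.fract x = x := Int.fract_eq_self.2 ⟨hx2.1.le, lt_of_le_of_ne hx2.2 hx⟩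
        simp only [this]
      rw [this, intervalIntegral.integral_add, intervalIntegral.integral_comp_sub_left (fun x => x ^ k),
        integral_pow]
      · simp
        have hk1 : (0:ℝ) < k := by positivity
        rw [div_lt_iff₀ hε] at hk
        rw [← two_mul, ← div_eq_mul_inv, div_le_iff₀ (by positivity)]
        nlinarith
      · exact Continuous.intervalIntegrable (by fun_prop) _ _
      · exact Continuous.intervalIntegrable (by fun_prop) _ _

lemma Good.dil {f : ℝ → ℝ} (h : Good f) (n : ℤ) (hn : n ≠ 0) (d : ℝ) :
    Good (fun x => f (n * x + d)) where
  meas := h.meas.comp (by fun_prop)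
  nonneg _ := h.nonneg _
  le_one _ := h.le_one _
  approx ε hε := by
    obtain ⟨G, e, hG, he, pG, pe, G0, G1, hfe, hint⟩ := h.approx ε hε
    have hper : ∀ u : ℝ → ℝ, Function.Periodic u 1 →
        Function.Periodic (fun x => u (n * x + d)) 1 := by
      intro u hu x
      have : (n : ℝ) * (x + 1) + d = n * x + d + n * 1 := by ring
      simp only [this]
      exact hu.int_mul n _
    refine ⟨fun x => G (n * x + d), fun x => e (n * x + d), by fun_prop, by fun_prop, hper _ pG,
      hper _ pe, fun _ => G0 _, fun _ => G1 _, fun _ => hfe _, ?_⟩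
    rw [dilate pe (fun a b => he.intervalIntegrable a b) n hn d]
    exact hint

lemma Good.mul {f g : ℝ → ℝ} (hf : Good f) (hg : Good g) : Good (fun x => f x * g x) where
  meas := hf.meas.mul hg.meas
  nonneg x := mul_nonneg (hf.nonneg x) (hg.nonneg x)
  le_one x := mul_le_one₀ (hf.le_one x) (hg.nonneg x) (hg.le_one x)
  approx ε hε := by
    obtain ⟨G, e, hG, he, pG, pe, G0, G1, hfe, hint⟩ := hf.approx (ε / 2) (by positivity)
    obtain ⟨G', e', hG', he', pG', pe', G0', G1', hfe', hint'⟩ := hg.approx (ε / 2) (by positivity)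
    refine ⟨fun x => G x * G' x, fun x => e x + e' x, by fun_prop, by fun_prop, pG.mul pG',
      pe.add pe', fun x => mul_nonneg (G0 x) (G0' x), fun x => mul_le_one₀ (G1 x) (G0' x) (G1' x),
      fun x => ?_, ?_⟩
    · have e1 : f x * g x - G x * G' x = (f x - G x) * g x + G x * (g x - G' x) := by ring
      rw [e1]
      refine (abs_add_le _ _).trans (add_le_add ?_ ?_)
      · rw [abs_mul, abs_of_nonneg (hg.nonneg x)]
        exact (mul_le_of_le_one_right (abs_nonneg _) (hg.le_one x)).trans (hfe x)
      · rw [abs_mul, abs_of_nonneg (G0 x)]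
        exact (mul_le_of_le_one_left (abs_nonneg _) (G1 x)).trans (hfe' x)
    · rw [intervalIntegral.integral_add (he.intervalIntegrable _ _) (he'.intervalIntegrable _ _)]
      linarith

lemma Good.weyl {f : ℝ → ℝ} (h : Good f) (θ : ℝ) (hθ : Irrational θ) (x0 : ℝ) :
    Tendsto (fun N : ℕ => ((N : ℝ))⁻¹ * ∑ m ∈ range N, f (x0 + m * θ)) atTop
      (nhds (∫ x in (0:ℝ)..1, f x)) := by
  rw [Metric.tendsto_atTop]
  intro ε hε
  obtain ⟨G, e, hG, he, pG, pe, G0, G1, hfe, hint⟩ := h.approx (ε / 5) (by positivity)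
  obtain ⟨N1, hN1⟩ := Metric.tendsto_atTop.1 (weyl_real θ hθ x0 G hG pG) (ε / 5) (by positivity)
  obtain ⟨N2, hN2⟩ := Metric.tendsto_atTop.1 (weyl_real θ hθ x0 e he pe) (ε / 5) (by positivity)
  refine ⟨max N1 N2, fun N hN => ?_⟩
  have h1 := hN1 N (le_trans (le_max_left _ _) hN)
  have h2 := hN2 N (le_trans (le_max_right _ _) hN)
  rw [Real.dist_eq] at h1 h2 ⊢
  have hN0 : (0:ℝ) ≤ (N : ℝ)⁻¹ := by positivity
  have h3 : |(N : ℝ)⁻¹ * ∑ m ∈ range N, f (x0 + m * θ) - (N : ℝ)⁻¹ * ∑ m ∈ range N, G (x0 + m * θ)|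
      ≤ (N : ℝ)⁻¹ * ∑ m ∈ range N, e (x0 + m * θ) := by
    rw [← mul_sub, ← sum_sub_distrib, abs_mul, abs_of_nonneg hN0]
    gcongr
    exact (abs_sum_le_sum_abs _ _).trans (sum_le_sum fun m _ => hfe _)
  have h4 : |(∫ x in (0:ℝ)..1, f x) - ∫ x in (0:ℝ)..1, G x| ≤ ε / 5 := by
    rw [← intervalIntegral.integral_sub (h.ii 0 1) (hG.intervalIntegrable _ _)]
    refine (intervalIntegral.abs_integral_le_integral_abs zero_le_one).trans (le_trans ?_ hint)
    refine intervalIntegral.integral_mono_on zero_le_one ?_ (he.intervalIntegrable _ _)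
      (fun x _ => hfe x)
    exact ((h.ii 0 1).sub (hG.intervalIntegrable _ _)).abs
  rw [abs_lt] at *
  rw [abs_le] at *
  constructor <;> linarith [h1.1, h1.2, h2.1, h2.2, h3.1, h3.2, h4.1, h4.2]

lemma sum_block (u : ℕ → ℝ) (Q N : ℕ) :
    ∑ j ∈ range (Q * N), u j = ∑ c ∈ range Q, ∑ m ∈ range N, u (Q * m + c) := by
  induction N with
  | zero => simp
  | succ N ih =>
    rw [Nat.mul_succ, sum_range_add, ih, ← sum_add_distrib]
    exact sum_congr rfl fun c _ => (sum_range_succ _ _).symm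

/-- Passing from averages over blocks of length `Q` to all averages. -/
lemma block_limit (u : ℕ → ℝ) (hu0 : ∀ j, 0 ≤ u j) (hu1 : ∀ j, u j ≤ 1) (hz : u 0 = 0) (Q : ℕ)
    (hQ : 0 < Q) (L : ℝ)
    (h : Tendsto (fun N : ℕ => (N : ℝ)⁻¹ * ∑ j ∈ range (Q * N), u j) atTop (nhds (Q * L))) :
    Tendsto (fun n : ℕ => (1 / (n : ℝ)) * ∑ j ∈ Icc 1 n, u j) atTop (nhds L) := by
  have hQr : (0 : ℝ) < Q := by exact_mod_cast hQ
  have hinv := tendsto_inv_atTop_nhds_zero_nat (𝕜 := ℝ)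
  have hdiv : Tendsto (fun n : ℕ => n / Q) atTop atTop := Nat.tendsto_div_const_atTop hQ.ne'
  have h1 := h.comp hdiv
  have hratio : Tendsto (fun n : ℕ => ((n / Q : ℕ) : ℝ) * (n : ℝ)⁻¹) atTop (nhds (1 / Q)) := by
    have herr : Tendsto (fun n : ℕ => ((n % Q : ℕ) : ℝ) * (n : ℝ)⁻¹) atTop (nhds 0) := by
      have : Tendsto (fun n : ℕ => (Q : ℝ) * (n : ℝ)⁻¹) atTop (nhds 0) := by
        simpa using hinv.const_mul (Q : ℝ)
      refine squeeze_zero (fun n => by positivity) (fun n => ?_) this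
      have : n % Q ≤ Q := (Nat.mod_lt n hQ).le
      gcongr
    have h3 : Tendsto (fun n : ℕ => (1 - ((n % Q : ℕ) : ℝ) * (n : ℝ)⁻¹) / Q) atTop
        (nhds ((1 - 0) / Q)) := (herr.const_sub 1).div_const _
    rw [sub_zero] at h3
    refine h3.congr' ?_
    filter_upwards [eventually_gt_atTop 0] with n hn
    have hn' : (n : ℝ) ≠ 0 := by positivity
    have hd : (n : ℝ) = Q * ((n / Q : ℕ) : ℝ) + ((n % Q : ℕ) : ℝ) := by
      exact_mod_cast (Nat.div_add_mod n Q).symm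
    field_simp
    linarith
  have h2 : Tendsto (fun n : ℕ => (n : ℝ)⁻¹ * ∑ j ∈ range (Q * (n / Q)), u j) atTop (nhds L) := by
    have h4 := hratio.mul h1
    have e : 1 / (Q : ℝ) * (Q * L) = L := by field_simp
    rw [e] at h4
    refine h4.congr fun n => ?_
    simp only [Function.comp]
    by_cases hN : n / Q = 0
    · simp [hN]
    · have : ((n / Q : ℕ) : ℝ) ≠ 0 := by exact_mod_cast hN
      field_simp
  have h5 : Tendsto (fun n : ℕ => (n : ℝ)⁻¹ * (∑ j ∈ Icc 1 n, u j
      - ∑ j ∈ range (Q * (n / Q)), u j)) atTop (nhds 0) := by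
    have : Tendsto (fun n : ℕ => (n : ℝ)⁻¹ * (Q : ℝ)) atTop (nhds 0) := by
      simpa using hinv.mul_const (Q : ℝ)
    have key : ∀ n : ℕ, ∑ j ∈ Icc 1 n, u j - ∑ j ∈ range (Q * (n / Q)), u j
        = ∑ i ∈ range (n % Q + 1), u (Q * (n / Q) + i) := by
      intro n
      have e1 : ∑ j ∈ Icc 1 n, u j = ∑ j ∈ range (n + 1), u j := by
        rw [sum_range_succ' u n, hz, add_zero, Finset.range_eq_Ico,
          Finset.sum_Ico_add' u 0 n 1]
        rfl
      have e2 : n + 1 = Q * (n / Q) + (n % Q + 1) := by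
        have := Nat.div_add_mod n Q; omega
      rw [e1]
      conv_lhs => rw [e2]
      rw [sum_range_add]
      ring
    refine squeeze_zero (fun n => ?_) (fun n => ?_) this
    · rw [key]
      exact mul_nonneg (by positivity) (sum_nonneg fun _ _ => hu0 _)
    · rw [key]
      gcongr
      calc ∑ i ∈ range (n % Q + 1), u (Q * (n / Q) + i) ≤ ∑ i ∈ range (n % Q + 1), (1:ℝ) :=
            sum_le_sum fun _ _ => hu1 _
        _ = ((n % Q + 1 : ℕ) : ℝ) := by simp
        _ ≤ Q := by exact_mod_cast Nat.mod_lt n hQ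
  have h6 := h2.add h5
  rw [add_zero] at h6
  refine h6.congr fun n => ?_
  rw [one_div]; ring

lemma integral_sB (n : ℤ) (hn : n ≠ 0) (d : ℝ) : ∫ x in (0:ℝ)..1, sB (n * x + d) = 0 := by
  have hp : Function.Periodic sB 1 := fun x => by simpa using sB_add_int x 1
  rw [dilate hp (fun a b => ii_of_bdd sB_meas 1 sB_abs a b) n hn d]
  have : ∫ x in (0:ℝ)..1, sB x = ∫ x in (0:ℝ)..1, (x - 1 / 2) := by
    apply intervalIntegral.integral_congr_ae
    have : ∀ᵐ x : ℝ, x ≠ 1 := by simp [MeasureTheory.ae_iff]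
    filter_upwards [this] with x hx hx2
    rw [Set.uIoc_of_le zero_le_one] at hx2
    have : Int.fract x = x := Int.fract_eq_self.2 ⟨hx2.1.le, lt_of_le_of_ne hx2.2 hx⟩
    simp [sB, this]
  rw [this, intervalIntegral.integral_comp_sub_right (fun x => x), integral_id]
  norm_num

lemma sum_integrals (p r s : ℤ) (Q : ℕ) (hQ : 0 < Q) (hpq : IsCoprime p (Q : ℤ)) (hr : r ≠ 0)
    (hs : s ≠ 0) :
    ∑ c ∈ range Q, ∫ x in (0:ℝ)..1,
      Int.fract ((s : ℝ) * x + 0) * Int.fract ((r : ℝ) * x + p * c / Q)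
      = corr s (Q * r) + Q / 4 := by
  have h1 : ∀ c ∈ range Q, (∫ x in (0:ℝ)..1,
      Int.fract ((s : ℝ) * x + 0) * Int.fract ((r : ℝ) * x + p * c / Q))
      = (∫ x in (0:ℝ)..1, sB ((s : ℝ) * x + 0) * sB ((r : ℝ) * x + p * c / Q)) + 1 / 4 := by
    intro c _
    have ii (n : ℤ) (d : ℝ) : IntervalIntegrable (fun x => sB ((n : ℝ) * x + d))
        MeasureTheory.volume 0 1 :=
      ii_of_bdd (sB_meas.comp (by fun_prop)) 1 (fun x => sB_abs _) 0 1
    have e : ∀ x : ℝ, Int.fract ((s : ℝ) * x + 0) * Int.fract ((r : ℝ) * x + p * c / Q)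
        = sB ((s : ℝ) * x + 0) * sB ((r : ℝ) * x + p * c / Q)
          + ((1 / 2) * sB ((s : ℝ) * x + 0) + ((1 / 2) * sB ((r : ℝ) * x + p * c / Q) + 1 / 4)) := by
      intro x; unfold sB; ring
    simp only [e]
    rw [intervalIntegral.integral_add (sB_prod_ii _ _ _ _ _ _)
      (((ii s 0).const_mul _).add (((ii r _).const_mul _).add intervalIntegrable_const)),
      intervalIntegral.integral_add ((ii s 0).const_mul _)
        (((ii r _).const_mul _).add intervalIntegrable_const),
      intervalIntegral.integral_add ((ii r _).const_mul _) intervalIntegrable_const,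
      intervalIntegral.integral_const_mul, intervalIntegral.integral_const_mul,
      integral_sB s hs, integral_sB r hr]
    simp
  rw [sum_congr rfl h1, sum_add_distrib, ← intervalIntegral.integral_finsetSum]
  · congr 1
    · unfold corr
      congr 1
      ext x
      rw [← mul_sum, sB_hermite Q hQ p hpq]
      push_cast
      congr 2 <;> ring
    · simp; ring
  · intro c _
    exact sB_prod_ii _ _ _ _ _ _



/-- Let `α` be irrational, `p, q` coprime with `q > 0`, `r ≠ 0` and `s > 0` coprime,
and `β = p/q + (r/s)α`. Then
`lim_{n→∞} (1/n) ∑_{j=1}^n {jα}{jβ} = 1/4 + gcd(s,q)²/(12srq²)`. -/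
theorem stmt_14 (α : ℝ) (hα : Irrational α) (p q r s : ℤ)
    (hq : 0 < q) (hpq : Int.gcd p q = 1) (hr : r ≠ 0) (hs : 0 < s) (hrs : Int.gcd r s = 1)
    (β : ℝ) (hβ : β = (p : ℝ) / (q : ℝ) + ((r : ℝ) / (s : ℝ)) * α) :
    Tendsto
      (fun n : ℕ =>
        (1 / (n : ℝ)) *
          ∑ j ∈ Finset.Icc 1 n, Int.fract ((j : ℝ) * α) * Int.fract ((j : ℝ) * β))
      atTop
      (nhds (1 / 4 + (Int.gcd s q : ℝ) ^ 2 / (12 * (s : ℝ) * (r : ℝ) * (q : ℝ) ^ 2))) := by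

  lift q to ℕ using hq.le
  have hQ : 0 < q := by exact_mod_cast hq
  have hqr : (q : ℝ) ≠ 0 := by positivity
  have hsr : (s : ℝ) ≠ 0 := by exact_mod_cast hs.ne'
  have hrr : (r : ℝ) ≠ 0 := by exact_mod_cast hr
  have hcop : IsCoprime p (q : ℤ) := Int.isCoprime_iff_gcd_eq_one.2 hpq
  set θ : ℝ := α / s with hθ
  have hα' : α = s * θ := by rw [hθ]; field_simp
  have hθi : Irrational θ := hα.div_intCast hs.ne'
  have hqθ : Irrational ((q : ℝ) * θ) := hθi.natCast_mul hQ.ne'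
  have hgcd : Int.gcd s ((q : ℤ) * r) = Int.gcd s q := by
    rw [mul_comm]
    exact Int.gcd_mul_right_right_of_gcd_eq_one (by rwa [Int.gcd_comm])
  refine block_limit (fun j : ℕ => Int.fract ((j : ℝ) * α) * Int.fract ((j : ℝ) * β))
    (fun j => mul_nonneg (Int.fract_nonneg _) (Int.fract_nonneg _))
    (fun j => mul_le_one₀ (Int.fract_lt_one _).le (Int.fract_nonneg _) (Int.fract_lt_one _).le)
    (by simp) q hQ _ ?_
  have hlim : Tendsto (fun N : ℕ => ∑ c ∈ range q, (N : ℝ)⁻¹ * ∑ m ∈ range N,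
      (fun x : ℝ => Int.fract ((s : ℝ) * x + 0) * Int.fract ((r : ℝ) * x + p * c / q))
        (c * θ + m * (q * θ))) atTop (nhds (∑ c ∈ range q, ∫ x in (0:ℝ)..1,
      Int.fract ((s : ℝ) * x + 0) * Int.fract ((r : ℝ) * x + p * c / q))) := by
    refine tendsto_finsetSum _ fun c _ => ?_
    exact ((good_fract.dil s hs.ne' 0).mul (good_fract.dil r hr (p * c / q))).weyl _ hqθ _
  rw [sum_integrals p r s q hQ hcop hr hs.ne', corr_eq s _ hs (by positivity), hgcd] at hlim
  have hL : (Int.gcd s q : ℝ) ^ 2 / (12 * (s : ℝ) * (((q : ℤ) * r : ℤ) : ℝ)) + (q : ℝ) / 4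
      = q * (1 / 4 + (Int.gcd s q : ℝ) ^ 2 / (12 * (s : ℝ) * (r : ℝ) * (((q : ℤ) : ℝ)) ^ 2)) := by
    push_cast
    field_simp
    ring
  rw [hL] at hlim
  refine hlim.congr fun N => ?_
  rw [sum_block, mul_sum]
  refine sum_congr rfl fun c _ => ?_
  congr 1
  refine sum_congr rfl fun m _ => ?_
  have e1 : (s : ℝ) * (c * θ + m * (q * θ)) + 0 = ((q * m + c : ℕ) : ℝ) * α := by
    rw [hα']; push_cast; ring
  have e2 : ((q * m + c : ℕ) : ℝ) * β
      = (r : ℝ) * (c * θ + m * (q * θ)) + p * c / q + ((p * m : ℤ) : ℝ) := by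
    rw [hβ, hα']; push_cast; field_simp; ring
  simp only []
  rw [e1, e2, Int.fract_add_intCast]
end

section
/- Let α₁, β₁, α₂, β₂ be irrational numbers that are linearly independent over ℚ. Then lim_{N→∞} (1/N) ∑_{j=1}^N ({jβ₁} − {jα₁})({jβ₂} − {jα₂}) = 0, and for irrational α, β linearly independent over ℚ, lim_{N→∞} (1/N) ∑_{j=1}^N ({jβ} − {jα})² = 1/6. -/
open Filter Finset

/-- the Cesàro means of `u` tend to zero -/
def ZM (u : ℕ → ℝ) : Prop :=
  Tendsto (fun N : ℕ => (1 / (N : ℝ)) * ∑ j ∈ Finset.Icc 1 N, u j) atTop (nhds 0)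

lemma ZM.add {u v : ℕ → ℝ} (hu : ZM u) (hv : ZM v) : ZM (fun j => u j + v j) := by
  have := Tendsto.add hu hv
  simpa [ZM, Finset.sum_add_distrib, mul_add] using this

lemma ZM.mulc {u : ℕ → ℝ} (c : ℝ) (hu : ZM u) : ZM (fun j => c * u j) := by
  have := Tendsto.const_mul c hu
  simpa [ZM, ← Finset.mul_sum, mul_left_comm] using this

lemma ZM.sub {u v : ℕ → ℝ} (hu : ZM u) (hv : ZM v) : ZM (fun j => u j - v j) := by
  have := Tendsto.sub hu hv
  simpa [ZM, Finset.sum_sub_distrib, mul_sub] using this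

lemma zm_cos (θ s : ℝ) (h : ∀ c : ℤ, θ ≠ c) :
    ZM (fun j => Real.cos (2 * Real.pi * (j * θ + s))) := by
  have hs : Real.sin (Real.pi * θ) ≠ 0 := by
    intro h0
    obtain ⟨n, hn⟩ := Real.sin_eq_zero_iff.1 h0
    apply h n
    have := Real.pi_pos.ne'
    apply mul_left_cancel₀ this
    linarith
  have tel : ∀ N : ℕ, 2 * Real.sin (Real.pi * θ) *
      ∑ j ∈ Finset.Icc 1 N, Real.cos (2 * Real.pi * (j * θ + s)) =
      Real.sin (2 * Real.pi * (N * θ + s) + Real.pi * θ)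
        - Real.sin (2 * Real.pi * s + Real.pi * θ) := by
    intro N
    induction N with
    | zero => simp
    | succ k ih =>
      rw [Finset.sum_Icc_succ_top (by omega), mul_add, ih]
      have e1 : 2 * Real.pi * (k * θ + s) + Real.pi * θ =
        2 * Real.pi * (((k + 1 : ℕ) : ℝ) * θ + s) - Real.pi * θ := by push_cast; ring
      rw [e1, Real.sin_sub, Real.sin_add (2 * Real.pi * (((k + 1 : ℕ) : ℝ) * θ + s))]
      ring
  have hb : ∀ N : ℕ, |∑ j ∈ Finset.Icc 1 N, Real.cos (2 * Real.pi * (j * θ + s))|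
      ≤ 1 / |Real.sin (Real.pi * θ)| := by
    intro N
    have hp := abs_pos.2 hs
    rw [le_div_iff₀ hp]
    have h1 := congrArg abs (tel N)
    rw [abs_mul, abs_mul, abs_two] at h1
    have h2 := abs_sub (Real.sin (2 * Real.pi * (N * θ + s) + Real.pi * θ))
      (Real.sin (2 * Real.pi * s + Real.pi * θ))
    have h3 := Real.abs_sin_le_one (2 * Real.pi * (N * θ + s) + Real.pi * θ)
    have h4 := Real.abs_sin_le_one (2 * Real.pi * s + Real.pi * θ)
    nlinarith
  unfold ZM
  have h0 : Tendsto (fun N : ℕ => (1 / (N : ℝ)) * (1 / |Real.sin (Real.pi * θ)|))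
      atTop (nhds 0) := by
    simpa using (tendsto_one_div_atTop_nhds_zero_nat (𝕜 := ℝ)).mul_const
      (1 / |Real.sin (Real.pi * θ)|)
  refine squeeze_zero_norm (fun N => ?_) h0
  rw [Real.norm_eq_abs, abs_mul, abs_of_nonneg (by positivity : (0 : ℝ) ≤ 1 / (N : ℝ))]
  exact mul_le_mul_of_nonneg_left (hb N) (by positivity)

/-- periodic second Bernoulli function -/
noncomputable def CB (x : ℝ) : ℝ := Int.fract x ^ 2 - Int.fract x + 1 / 6

lemma cb_hasSum (x : ℝ) : HasSum (fun n : ℕ => 1 / (n : ℝ) ^ 2 * Real.cos (2 * Real.pi * n * x))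
    (Real.pi ^ 2 * CB x) := by
  have h := hasSum_one_div_nat_pow_mul_cos (k := 1) one_ne_zero (x := Int.fract x)
    ⟨Int.fract_nonneg x, (Int.fract_lt_one x).le⟩
  have e : ∀ n : ℕ, Real.cos (2 * Real.pi * n * Int.fract x)
      = Real.cos (2 * Real.pi * n * x) := by
    intro n
    rw [show 2 * Real.pi * n * Int.fract x = 2 * Real.pi * n * x -
      ((n * ⌊x⌋ : ℤ) : ℝ) * (2 * Real.pi) by rw [Int.fract]; push_cast; ring]
    exact Real.cos_sub_int_mul_two_pi _ _
  simp only [e] at h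
  convert h using 1
  simp [CB, Polynomial.bernoulli, Finset.sum_range_succ, bernoulli_eq_bernoulli'_of_ne_one,
    bernoulli_one]
  ring

lemma cb_ineq (x t : ℝ) : CB (x + t) ≤ CB x + 2 * t * (Int.fract x - 1 / 2) + t ^ 2 := by
  unfold CB
  have h0 := Int.fract_nonneg (x + t)
  have h1 := Int.fract_lt_one (x + t)
  have hx : (Int.fract x) + t = Int.fract (x + t) + ((⌊x + t⌋ - ⌊x⌋ : ℤ) : ℝ) := by
    push_cast
    linarith [Int.floor_add_fract x, Int.floor_add_fract (x + t)]
  generalize ⌊x + t⌋ - ⌊x⌋ = n at hx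
  generalize Int.fract (x + t) = u at *
  have ht : t = u + n - Int.fract x := by linarith
  subst ht
  suffices 0 ≤ (n : ℝ) * (n - 1) + 2 * u * n by nlinarith
  rcases le_or_gt 1 n with h | h
  · have : (1 : ℝ) ≤ n := by exact_mod_cast h
    nlinarith [mul_nonneg h0 (by linarith : (0 : ℝ) ≤ n)]
  · rcases eq_or_lt_of_le (Int.lt_add_one_iff.1 (by simpa using h) : n ≤ 0) with h | h
    · simp [h]
    · have : (n : ℝ) ≤ -1 := by exact_mod_cast (by omega : n ≤ -1)
      nlinarith

lemma zm_cb (v : ℕ → ℝ) (hv : ∀ j, |v j| ≤ 2) (x : ℝ)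
    (h : ∀ n : ℕ, 1 ≤ n → ∀ s : ℝ, ZM (fun j => v j * Real.cos (2 * Real.pi * (j * (n * x) + s))))
    (s : ℝ) : ZM (fun j => v j * CB (j * x + s)) := by
  have key : Tendsto (fun N : ℕ => ∑' n : ℕ, 1 / (n : ℝ) ^ 2 * ((1 / (N : ℝ)) *
      ∑ j ∈ Finset.Icc 1 N, v j * Real.cos (2 * Real.pi * n * (j * x + s)))) atTop
      (nhds (∑' n : ℕ, (0 : ℝ))) := by
    refine tendsto_tsum_of_dominated_convergence (bound := fun n : ℕ => 1 / (n : ℝ) ^ 2 * 2)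
      ((Real.summable_one_div_nat_pow.2 one_lt_two).mul_right 2) ?_ ?_
    · intro n
      rcases Nat.eq_zero_or_pos n with rfl | hn
      · simp
      · have := (h n hn (n * s)).const_mul (1 / (n : ℝ) ^ 2)
        rw [mul_zero] at this
        refine this.congr fun N => ?_
        congr 2
        refine Finset.sum_congr rfl fun j _ => ?_
        congr 2
        ring
    · refine Eventually.of_forall fun N n => ?_
      rw [Real.norm_eq_abs, abs_mul, abs_of_nonneg (by positivity : (0 : ℝ) ≤ 1 / (n : ℝ) ^ 2)]
      refine mul_le_mul_of_nonneg_left ?_ (by positivity)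
      rw [abs_mul, abs_of_nonneg (by positivity : (0 : ℝ) ≤ 1 / (N : ℝ))]
      have : |∑ j ∈ Finset.Icc 1 N, v j * Real.cos (2 * Real.pi * n * (j * x + s))| ≤ N * 2 := by
        refine (Finset.abs_sum_le_sum_abs _ _).trans ?_
        refine (Finset.sum_le_card_nsmul _ _ 2 fun j _ => ?_).trans (by simp)
        rw [abs_mul]
        nlinarith [hv j, abs_nonneg (v j),
          Real.abs_cos_le_one (2 * Real.pi * n * (j * x + s))]
      rcases Nat.eq_zero_or_pos N with rfl | hN
      · simp
      · have hN' : (0 : ℝ) < N := by exact_mod_cast hN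
        rw [one_div, inv_mul_le_iff₀ hN']
        exact this
  rw [tsum_zero] at key
  have hpi : Real.pi ^ 2 ≠ 0 := by positivity
  have k2 := key.const_mul (1 / Real.pi ^ 2)
  rw [mul_zero] at k2
  refine k2.congr fun N => ?_
  have hs : HasSum (fun n : ℕ => 1 / (n : ℝ) ^ 2 * ((1 / (N : ℝ)) *
      ∑ j ∈ Finset.Icc 1 N, v j * Real.cos (2 * Real.pi * n * (j * x + s))))
      ((1 / (N : ℝ)) * ∑ j ∈ Finset.Icc 1 N, v j * (Real.pi ^ 2 * CB (j * x + s))) := by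
    have := (hasSum_sum (s := Finset.Icc 1 N)
      (fun (j : ℕ) _ => (cb_hasSum (j * x + s)).mul_left (v j))).mul_left (1 / (N : ℝ))
    refine Eq.mp (congrArg (fun f => HasSum f _) (funext fun n => ?_)) this
    symm
    rw [mul_left_comm, Finset.mul_sum]
    congr 1
    exact Finset.sum_congr rfl fun j _ => by ring
  rw [hs.tsum_eq]
  rw [show ∑ j ∈ Finset.Icc 1 N, v j * (Real.pi ^ 2 * CB (j * x + s)) =
    Real.pi ^ 2 * ∑ j ∈ Finset.Icc 1 N, v j * CB (j * x + s) by
      rw [Finset.mul_sum]; exact Finset.sum_congr rfl fun j _ => by ring]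
  rw [mul_left_comm (1 / (N : ℝ)), ← mul_assoc, one_div_mul_cancel hpi, one_mul]

lemma zm_psi (v : ℕ → ℝ) (hv0 : ∀ j, 0 ≤ v j) (hv : ∀ j, v j ≤ 2) (x : ℝ)
    (h : ∀ s : ℝ, ZM (fun j => v j * CB (j * x + s))) :
    ZM (fun j => v j * (Int.fract (j * x) - 1 / 2)) := by
  unfold ZM
  rw [Metric.tendsto_atTop]
  intro ε hε
  set δ := ε / 2 with hδ
  have hδ0 : 0 < δ := by positivity
  have hU : ZM (fun j => v j * CB (j * x + 0) - v j * CB (j * x + -δ)) := (h 0).sub (h (-δ))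
  have hL : ZM (fun j => v j * CB (j * x + δ) - v j * CB (j * x + 0)) := (h δ).sub (h 0)
  obtain ⟨N1, h1⟩ := Metric.tendsto_atTop.1 hU (δ ^ 2) (by positivity)
  obtain ⟨N2, h2⟩ := Metric.tendsto_atTop.1 hL (δ ^ 2) (by positivity)
  refine ⟨max (max N1 N2) 1, fun N hN => ?_⟩
  have a1 := h1 N (by omega)
  have a2 := h2 N (by omega)
  have hN1 : (0 : ℝ) < N := by exact_mod_cast (by omega : 0 < N)
  rw [Real.dist_eq, sub_zero, abs_lt] at *
  have c : (1 / (N : ℝ)) * ∑ j ∈ Finset.Icc 1 N, 2 * δ ^ 2 = 2 * δ ^ 2 := by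
    simp; field_simp
  have up : (1 / (N : ℝ)) * ∑ j ∈ Finset.Icc 1 N, 2 * δ * (v j * (Int.fract (j * x) - 1 / 2)) ≤
     (1 / (N : ℝ)) * ∑ j ∈ Finset.Icc 1 N,
      ((v j * CB (j * x + 0) - v j * CB (j * x + -δ)) + 2 * δ ^ 2) := by
    refine mul_le_mul_of_nonneg_left (Finset.sum_le_sum fun j _ => ?_) (by positivity)
    have := mul_le_mul_of_nonneg_left (cb_ineq (j * x) (-δ)) (hv0 j)
    have := mul_le_mul_of_nonneg_right (hv j) (sq_nonneg δ)
    rw [add_zero]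
    nlinarith
  have lo : (1 / (N : ℝ)) * ∑ j ∈ Finset.Icc 1 N,
      ((v j * CB (j * x + δ) - v j * CB (j * x + 0)) - 2 * δ ^ 2) ≤
      (1 / (N : ℝ)) * ∑ j ∈ Finset.Icc 1 N, 2 * δ * (v j * (Int.fract (j * x) - 1 / 2)) := by
    refine mul_le_mul_of_nonneg_left (Finset.sum_le_sum fun j _ => ?_) (by positivity)
    have := mul_le_mul_of_nonneg_left (cb_ineq (j * x) δ) (hv0 j)
    have := mul_le_mul_of_nonneg_right (hv j) (sq_nonneg δ)
    rw [add_zero]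
    nlinarith
  rw [Finset.sum_add_distrib, mul_add, c, ← Finset.mul_sum, mul_left_comm] at up
  rw [Finset.sum_sub_distrib, mul_sub, c, ← Finset.mul_sum, mul_left_comm] at lo
  have he : ε = 2 * δ := by rw [hδ]; ring
  rw [he]
  constructor
  · by_contra! hc
    have := mul_le_mul_of_nonneg_left hc (by positivity : (0 : ℝ) ≤ 2 * δ)
    nlinarith
  · by_contra! hc
    have := mul_le_mul_of_nonneg_left hc (by positivity : (0 : ℝ) ≤ 2 * δ)
    nlinarith

lemma zm_psi' (w : ℕ → ℝ) (hw : ∀ j, |w j| ≤ 1) (x : ℝ)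
    (hx : ∀ n : ℕ, 1 ≤ n → ∀ c : ℤ, n * x ≠ c)
    (h : ∀ n : ℕ, 1 ≤ n → ∀ s : ℝ,
      ZM (fun j => w j * Real.cos (2 * Real.pi * (j * (n * x) + s)))) :
    ZM (fun j => w j * (Int.fract (j * x) - 1 / 2)) := by
  have b1 : ∀ n : ℕ, 1 ≤ n → ∀ s : ℝ,
      ZM (fun j => (1 : ℝ) * Real.cos (2 * Real.pi * (j * (n * x) + s))) := by
    intro n hn s
    simpa using zm_cos (n * x) s (hx n hn)
  have A := zm_psi (fun _ => 1) (by simp) (by norm_num) x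
    (zm_cb (fun _ => 1) (by norm_num) x b1)
  have hB : ∀ s : ℝ, ZM (fun j => (1 + w j) * CB (j * x + s)) := by
    apply zm_cb
    · intro j; have := abs_le.1 (hw j); rw [abs_le]; constructor <;> linarith
    · intro n hn s
      have := (b1 n hn s).add (h n hn s)
      simpa only [add_mul] using this
  have B := zm_psi (fun j => 1 + w j) (fun j => by linarith [(abs_le.1 (hw j)).1])
    (fun j => by linarith [(abs_le.1 (hw j)).2]) x hB
  have := B.sub A
  convert this using 2
  ring

lemma zm_prod (x y : ℝ) (h : ∀ a b c : ℤ, (a : ℝ) * x + b * y = c → a = 0 ∧ b = 0) :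
    ZM (fun j => (Int.fract (j * x) - 1 / 2) * (Int.fract (j * y) - 1 / 2)) := by
  have hx : ∀ n : ℕ, 1 ≤ n → ∀ c : ℤ, n * x ≠ c := by
    intro n hn c hc
    have := (h n 0 c (by simpa using hc)).1
    omega
  have hy : ∀ n : ℕ, 1 ≤ n → ∀ c : ℤ, n * y ≠ c := by
    intro n hn c hc
    have := (h 0 n c (by simpa using hc)).2
    omega
  apply zm_psi' _ _ y hy
  · intro n hn s
    have := zm_psi' (fun j => Real.cos (2 * Real.pi * (j * (n * y) + s)))
      (fun j => Real.abs_cos_le_one _) x hx ?_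
    · simpa only [mul_comm] using this
    · intro m hm t
      have p := zm_cos (m * x + n * y) (s + t) (fun c hc => by
        have := (h m n c (by simpa using hc)).1
        omega)
      have q := zm_cos (m * x - n * y) (t - s) (fun c hc => by
        have := (h m (-n) c (by push_cast; linarith)).1
        omega)
      have r := (p.add q).mulc (1 / 2)
      convert r using 2 with j
      rw [show 2 * Real.pi * (j * (m * x + n * y) + (s + t)) =
        2 * Real.pi * (j * (m * x) + t) + 2 * Real.pi * (j * (n * y) + s) by ring,
        show 2 * Real.pi * (j * (m * x - n * y) + (t - s)) =
        2 * Real.pi * (j * (m * x) + t) - 2 * Real.pi * (j * (n * y) + s) by ring,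
        Real.cos_add, Real.cos_sub]
      ring
  · intro j
    rw [abs_le]
    constructor <;> linarith [Int.fract_nonneg (j * x), Int.fract_lt_one (j * x)]

lemma zm_sq (x : ℝ) (hx : Irrational x) : ZM (fun j => CB (j * x)) := by
  have := zm_cb (fun _ => 1) (by norm_num) x (fun n hn s => by
    simpa using zm_cos (n * x) s (fun c => (hx.natCast_mul (by omega : n ≠ 0)).ne_int c)) 0
  simpa using this

lemma pair_of_indep (x y : ℝ) (hind : LinearIndependent ℚ ![(1 : ℝ), x, y]) :
    ∀ a b c : ℤ, (a : ℝ) * x + b * y = c → a = 0 ∧ b = 0 := by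
  intro a b c h
  have := Fintype.linearIndependent_iff.1 hind ![-(c : ℚ), a, b] (by
    simp [Fin.sum_univ_succ, Rat.smul_def]
    linarith)
  have h1 := this 1
  have h2 := this 2
  simp at h1 h2
  exact ⟨h1, h2⟩

/-- If `α₁, β₁, α₂, β₂` are irrational and linearly independent over `ℚ`
(i.e. `1, α₁, β₁, α₂, β₂` are `ℚ`-linearly independent), then
`lim (1/N) ∑_{j=1}^N ({jβ₁} − {jα₁})({jβ₂} − {jα₂}) = 0`; and for irrational `α, β`
linearly independent over `ℚ`, `lim (1/N) ∑_{j=1}^N ({jβ} − {jα})² = 1/6`. -/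
theorem stmt_16 (α₁ β₁ α₂ β₂ : ℝ)
    (h₁ : Irrational α₁) (h₂ : Irrational β₁) (h₃ : Irrational α₂) (h₄ : Irrational β₂)
    (hind : LinearIndependent ℚ ![(1 : ℝ), α₁, β₁, α₂, β₂]) :
    Tendsto
      (fun N : ℕ =>
        (1 / (N : ℝ)) *
          ∑ j ∈ Finset.Icc 1 N,
            (Int.fract ((j : ℝ) * β₁) - Int.fract ((j : ℝ) * α₁)) *
            (Int.fract ((j : ℝ) * β₂) - Int.fract ((j : ℝ) * α₂)))
      atTop (nhds 0)
    ∧ ∀ α β : ℝ, Irrational α → Irrational β →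
        LinearIndependent ℚ ![(1 : ℝ), α, β] →
        Tendsto
          (fun N : ℕ =>
            (1 / (N : ℝ)) *
              ∑ j ∈ Finset.Icc 1 N,
                (Int.fract ((j : ℝ) * β) - Int.fract ((j : ℝ) * α)) ^ 2)
          atTop (nhds (1 / 6)) := by
  constructor
  · have sub : ∀ i k : Fin 5, 0 ≠ i → 0 ≠ k → i ≠ k →
        ZM (fun j => (Int.fract (j * (![(1 : ℝ), α₁, β₁, α₂, β₂] i)) - 1 / 2) *
          (Int.fract (j * (![(1 : ℝ), α₁, β₁, α₂, β₂] k)) - 1 / 2)) := by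
      intro i k hi hk hik
      apply zm_prod
      apply pair_of_indep
      have hinj : Function.Injective ![(0 : Fin 5), i, k] := by
        intro a b hab
        fin_cases a <;> fin_cases b <;> simp_all [eq_comm]
      convert hind.comp _ hinj using 1
      funext a
      fin_cases a <;> simp
    have A := sub 2 4 (by decide) (by decide) (by decide)
    have B := sub 2 3 (by decide) (by decide) (by decide)
    have C := sub 1 4 (by decide) (by decide) (by decide)
    have D := sub 1 3 (by decide) (by decide) (by decide)
    have E : ZM _ := ((A.sub B).sub C).add D
    change ZM _
    convert E using 2 with j
    simp
    ring
  · intro α β ha hb hab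
    have A := zm_sq α ha
    have B := zm_sq β hb
    have C := (zm_prod α β (pair_of_indep α β hab)).mulc 2
    have D : ZM _ := (A.add B).sub C
    have E := Tendsto.add_const (1 / 6) D
    rw [zero_add] at E
    refine E.congr' ?_
    filter_upwards [eventually_gt_atTop 0] with N hN
    have hN' : (N : ℝ) ≠ 0 := by positivity
    have c : (1 / (N : ℝ)) * ∑ j ∈ Finset.Icc 1 N, (1 / 6 : ℝ) = 1 / 6 := by
      simp; field_simp
    conv_lhs => rw [← c]
    rw [← mul_add, ← Finset.sum_add_distrib]
    congr 1
    refine Finset.sum_congr rfl fun j _ => ?_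
    simp only [CB]
    ring
end

section
/- Let θ > 0. For all integers 1 ≤ j ≤ n, ∑_{p=j}^{n−1} A_{p−j}^{θ−1} / (p · A_p^{θ}) = Ψ_n(j)(1/j − 1/n), where for δ ∈ ℝ the Cesàro number A_m^{δ} is defined by A_m^{δ} := ((m+δ)(m−1+δ)⋯(1+δ))/m! (with A_0^{δ} = 1). -/
open Finset

/-- `Ψ_n(j) = ∏_{i=0}^{j−1} (n−i)/(θ+n−1−i)`. -/
noncomputable def Psi (θ : ℝ) (n j : ℕ) : ℝ :=
  ∏ i ∈ Finset.range j, ((n : ℝ) - i) / (θ + (n : ℝ) - 1 - i)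

/-- The Cesàro number `A_m^δ = ∏_{i=1}^m (i+δ)/i` (with `A_0^δ = 1`). -/
noncomputable def cesaroA (δ : ℝ) (m : ℕ) : ℝ :=
  ∏ i ∈ Finset.Icc 1 m, ((i : ℝ) + δ) / (i : ℝ)


lemma cesaroA_succ (δ : ℝ) (m : ℕ) :
    cesaroA δ (m + 1) = cesaroA δ m * (((m : ℝ) + 1 + δ) / ((m : ℝ) + 1)) := by
  unfold cesaroA
  rw [Finset.prod_Icc_succ_top (by omega)]
  push_cast
  rfl

lemma cesaroA_pos (θ : ℝ) (hθ : 0 < θ) (m : ℕ) : 0 < cesaroA θ m := by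
  unfold cesaroA
  apply Finset.prod_pos
  intro i hi
  have : 0 < (i : ℝ) := by
    have := (Finset.mem_Icc.mp hi).1
    exact_mod_cast this
  positivity

lemma Psi_succ_succ (θ : ℝ) (n j : ℕ) :
    Psi θ (n + 1) (j + 1) = Psi θ n j * (((n : ℝ) + 1) / (θ + n)) := by
  unfold Psi
  rw [Finset.prod_range_succ']
  congr 1
  · apply Finset.prod_congr rfl
    intro i _
    push_cast
    congr 1 <;> ring
  · push_cast
    congr 1 <;> ring

lemma Psi_step (θ : ℝ) (hθ : 0 < θ) (n j : ℕ) (h : j ≤ n) :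
    Psi θ (n + 1) j * (((n : ℝ) + 1 - j) * (θ + n)) = Psi θ n j * ((n + 1) * (θ + n - j)) := by
  have e1 := Psi_succ_succ θ n j
  have e2 : Psi θ (n + 1) (j + 1) = Psi θ (n + 1) j * (((n : ℝ) + 1 - j) / (θ + n - j)) := by
    unfold Psi
    rw [Finset.prod_range_succ]
    push_cast
    congr 2
    ring
  rw [e2] at e1
  have h' : (j : ℝ) ≤ n := by exact_mod_cast h
  have p1 : θ + n - j ≠ 0 := by linarith
  have p2 : θ + n ≠ 0 := by positivity
  field_simp at e1
  linarith

lemma ratio (θ : ℝ) (hθ : 0 < θ) (m j : ℕ) :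
    cesaroA (θ - 1) m * (θ + (m + j : ℕ)) = θ * Psi θ (m + j) j * cesaroA θ (m + j) := by
  induction j with
  | zero =>
    simp only [Psi, Finset.range_zero, Finset.prod_empty, add_zero, mul_one]
    induction m with
    | zero => simp [cesaroA]
    | succ m ih =>
      rw [cesaroA_succ, cesaroA_succ, ← mul_assoc, ← ih]
      push_cast
      ring
  | succ j ih =>
    rw [← add_assoc, Psi_succ_succ, cesaroA_succ]
    have p2 : θ + ((m + j : ℕ) : ℝ) ≠ 0 := by positivity
    have p3 : ((m + j : ℕ) : ℝ) + 1 ≠ 0 := by positivity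
    have e : ((m + j + 1 : ℕ) : ℝ) = ((m + j : ℕ) : ℝ) + 1 := by push_cast; ring
    rw [e]
    generalize ((m + j : ℕ) : ℝ) = x at *
    field_simp
    linear_combination (x + 1 + θ) * ih

/-- For all `1 ≤ j ≤ n`,
`∑_{p=j}^{n−1} A_{p−j}^{θ−1}/(p A_p^θ) = Ψ_n(j)(1/j − 1/n)`. -/
theorem stmt_18 (θ : ℝ) (hθ : 0 < θ) (n j : ℕ) (hj : 1 ≤ j) (hjn : j ≤ n) :
    ∑ p ∈ Finset.Ico j n, cesaroA (θ - 1) (p - j) / ((p : ℝ) * cesaroA θ p)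
      = Psi θ n j * (1 / (j : ℝ) - 1 / (n : ℝ)) := by
  induction n, hjn using Nat.le_induction with
  | base => simp
  | succ n hn ih =>
    rw [Finset.sum_Ico_succ_top hn, ih]
    have r := ratio θ hθ (n - j) j
    rw [Nat.sub_add_cancel hn] at r
    have s := Psi_step θ hθ n j hn
    have hA := (cesaroA_pos θ hθ n).ne'
    have h1 : (1 : ℝ) ≤ j := by exact_mod_cast hj
    have h2 : (j : ℝ) ≤ n := by exact_mod_cast hn
    have q1 : (j : ℝ) ≠ 0 := by linarith
    have q2 : (n : ℝ) ≠ 0 := by linarith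
    have q3 : (n : ℝ) + 1 ≠ 0 := by linarith
    have q4 : θ + n ≠ 0 := by linarith
    have q5 : (n : ℝ) + 1 - j ≠ 0 := by linarith
    have t1 : cesaroA (θ - 1) (n - j) = θ * Psi θ n j * cesaroA θ n / (θ + n) := by
      rw [eq_div_iff q4, r]
    have t2 : Psi θ (n + 1) j
        = Psi θ n j * ((n + 1) * (θ + n - j)) / (((n : ℝ) + 1 - j) * (θ + n)) := by
      rw [eq_div_iff (mul_ne_zero q5 q4), s]
    rw [t1, t2]
    push_cast
    field_simp
    ring
end
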